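/- (Appendix Lemma, full-state-feedback version.) If additionally e(0) = 0 and r(t) = ė(t) + α·e(t) for a constant α > 0, then there exist nonnegative constants ξ₁, ξ₂, ξ₃, depending only on β, α and the bounding constants m₂, ζ_{M1}, ζ_{C1}, ζ_{C2}, ζ_G, ζ_F, ζ_{d1}, such that for every t ≥ 0: ‖Ω(t)‖ ≤ (ξ₁ + ξ₂·E(t) + ξ₃·R(t))·R(t), where E(t) = sup_{0≤σ≤t} ‖e(σ)‖ and R(t) = sup_{0≤σ≤t} ‖r(σ)‖. -/

import Mathlib

open Matrix
open scoped BigOperators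

/-- Euclidean norm of a vector in `Fin m → ℝ`. -/
noncomputable def eunorm {m : ℕ} (v : Fin m → ℝ) : ℝ :=
  Real.sqrt (∑ i, (v i) ^ 2)

lemma eunorm_eq {m : ℕ} (v : Fin m → ℝ) :
    eunorm v = ‖(EuclideanSpace.equiv (Fin m) ℝ).symm v‖ := by
  rw [EuclideanSpace.norm_eq]
  simp [eunorm]

lemma eunorm_nonneg {m : ℕ} (v : Fin m → ℝ) : 0 ≤ eunorm v := Real.sqrt_nonneg _

lemma eunorm_add_le {m : ℕ} (v w : Fin m → ℝ) : eunorm (v + w) ≤ eunorm v + eunorm w := by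
  simp only [eunorm_eq, map_add]; exact norm_add_le _ _

lemma eunorm_neg {m : ℕ} (v : Fin m → ℝ) : eunorm (-v) = eunorm v := by
  simp only [eunorm_eq, map_neg, norm_neg]

lemma eunorm_sub_le {m : ℕ} (v w : Fin m → ℝ) : eunorm (v - w) ≤ eunorm v + eunorm w := by
  simp only [eunorm_eq, map_sub]; exact norm_sub_le _ _

lemma eunorm_smul {m : ℕ} (c : ℝ) (v : Fin m → ℝ) : eunorm (c • v) = |c| * eunorm v := by
  simp only [eunorm_eq, map_smul, norm_smul, Real.norm_eq_abs]

lemma eunorm_continuous {m : ℕ} : Continuous (eunorm : (Fin m → ℝ) → ℝ) := by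
  unfold eunorm; fun_prop

lemma eunorm_sq {m : ℕ} (v : Fin m → ℝ) : eunorm v ^ 2 = v ⬝ᵥ v := by
  unfold eunorm
  rw [Real.sq_sqrt (Finset.sum_nonneg fun i _ => sq_nonneg _)]
  simp [dotProduct, sq]

lemma dot_le_eunorm {m : ℕ} (v w : Fin m → ℝ) : v ⬝ᵥ w ≤ eunorm v * eunorm w := by
  unfold eunorm dotProduct
  exact Real.sum_mul_le_sqrt_mul_sqrt _ _ _

lemma eunorm_transpose {m : ℕ} (A : Matrix (Fin m) (Fin m) ℝ) (c : ℝ)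
    (h : ∀ v, eunorm (A.mulVec v) ≤ c * eunorm v) (v : Fin m → ℝ) :
    eunorm (Aᵀ.mulVec v) ≤ c * eunorm v := by
  set w := Aᵀ.mulVec v with hw
  have h1 : eunorm w ^ 2 ≤ eunorm v * (c * eunorm w) := by
    have : w ⬝ᵥ w = v ⬝ᵥ A.mulVec w := by
      rw [Matrix.dotProduct_mulVec v, ← Matrix.mulVec_transpose A v, ← hw]
    rw [eunorm_sq, this]
    exact (dot_le_eunorm _ _).trans (mul_le_mul_of_nonneg_left (h w) (eunorm_nonneg _))
  rcases (eunorm_nonneg w).eq_or_lt with h0 | h0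
  · rw [← h0]; exact (eunorm_nonneg _).trans (h v)
  · nlinarith

lemma eunorm_filter {m : ℕ} (β t K : ℝ) (hβ : 0 < β) (ht : 0 ≤ t) (f : ℝ → Fin m → ℝ)
    (hf : ∀ σ ∈ Set.Icc 0 t, eunorm (f σ) ≤ K) :
    eunorm (∫ σ in (0:ℝ)..t, (β * Real.exp (-β * (t - σ))) • f σ) ≤ K := by
  have hK : 0 ≤ K := (eunorm_nonneg _).trans (hf 0 ⟨le_rfl, ht⟩)
  have hd : ∀ σ : ℝ, HasDerivAt (fun s => K * Real.exp (-β * (t - s)))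
      (K * (β * Real.exp (-β * (t - σ)))) σ := by
    intro σ
    have h1 : HasDerivAt (fun s : ℝ => -β * (t - s)) β σ := by
      have := ((hasDerivAt_id σ).const_sub t).const_mul (-β)
      simpa using this
    have := (h1.exp).const_mul K
    exact this.congr_deriv (by ring)
  have hi : ∫ σ in (0:ℝ)..t, K * (β * Real.exp (-β * (t - σ)))
      = K * Real.exp (-β * (t - t)) - K * Real.exp (-β * (t - 0)) :=
    intervalIntegral.integral_eq_sub_of_hasDerivAt (fun σ _ => hd σ)
      (Continuous.intervalIntegrable (by fun_prop) _ _)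
  have hcomm : (EuclideanSpace.equiv (Fin m) ℝ).symm
      (∫ σ in (0:ℝ)..t, (β * Real.exp (-β * (t - σ))) • f σ)
      = ∫ σ in (0:ℝ)..t, (EuclideanSpace.equiv (Fin m) ℝ).symm
        ((β * Real.exp (-β * (t - σ))) • f σ) := by
    rw [intervalIntegral.integral_of_le ht, intervalIntegral.integral_of_le ht,
      ContinuousLinearEquiv.integral_comp_comm]
  rw [eunorm_eq, hcomm]
  have h2 : ‖∫ σ in (0:ℝ)..t, (EuclideanSpace.equiv (Fin m) ℝ).symm
        ((β * Real.exp (-β * (t - σ))) • f σ)‖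
      ≤ ∫ σ in (0:ℝ)..t, K * (β * Real.exp (-β * (t - σ))) := by
    apply intervalIntegral.norm_integral_le_of_norm_le ht
    · refine Filter.Eventually.of_forall fun σ hσ => ?_
      rw [← eunorm_eq, eunorm_smul, abs_of_pos (by positivity), mul_comm]
      exact mul_le_mul_of_nonneg_right (hf σ ⟨hσ.1.le, hσ.2⟩) (by positivity)
    · exact Continuous.intervalIntegrable (by fun_prop) _ _
  rw [hi] at h2
  have : 0 ≤ K * Real.exp (-β * (t - 0)) := by positivity
  simp only [sub_self, mul_zero, Real.exp_zero, mul_one] at h2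
  linarith

lemma eunorm_err {m : ℕ} (α t R : ℝ) (hα : 0 < α) (e e' : ℝ → Fin m → ℝ)
    (he : ∀ s, HasDerivAt e (e' s) s) (h0 : e 0 = 0)
    (hR : ∀ σ ∈ Set.Icc 0 t, eunorm (e' σ + α • e σ) ≤ R) :
    ∀ σ ∈ Set.Icc 0 t, eunorm (e σ) ≤ R / α := by
  intro σ hσ
  have hR0 : 0 ≤ R := (eunorm_nonneg _).trans (hR σ hσ)
  set L := (EuclideanSpace.equiv (Fin m) ℝ).symm with hL
  have hLe : ∀ s, HasDerivAt (fun s => L (e s)) (L (e' s)) s := fun s =>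
    (L.toContinuousLinearMap.hasFDerivAt (x := e s)).comp_hasDerivAt s (he s)
  have hex : ∀ s : ℝ, HasDerivAt (fun s => Real.exp (α * s)) (α * Real.exp (α * s)) s := by
    intro s
    have := (((hasDerivAt_id s).const_mul α)).exp
    simpa [mul_comm] using this
  have hf : ∀ s, HasDerivAt (fun s => Real.exp (α * s) • L (e s))
      (Real.exp (α * s) • L (e' s + α • e s)) s := by
    intro s
    have := (hex s).smul (hLe s)
    refine HasDerivAt.congr_deriv this ?_
    rw [map_add, map_smul, smul_add, smul_smul, mul_comm α (Real.exp _)]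
  have hB : ∀ s, HasDerivAt (fun s => R / α * (Real.exp (α * s) - 1))
      (R * Real.exp (α * s)) s := by
    intro s
    have := ((hex s).sub_const 1).const_mul (R / α)
    refine HasDerivAt.congr_deriv this ?_
    field_simp
  have key := image_norm_le_of_norm_deriv_right_le_deriv_boundary (a := 0) (b := t)
    (f := fun s => Real.exp (α * s) • L (e s))
    (f' := fun s => Real.exp (α * s) • L (e' s + α • e s))
    (B := fun s => R / α * (Real.exp (α * s) - 1)) (B' := fun s => R * Real.exp (α * s))
    (fun s _ => (hf s).continuousAt.continuousWithinAt)
    (fun s _ => (hf s).hasDerivWithinAt) (by simp [h0]) hB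
    (by
      intro s hs
      rw [norm_smul, ← eunorm_eq, Real.norm_eq_abs, abs_of_pos (Real.exp_pos _), mul_comm]
      exact mul_le_mul_of_nonneg_right (hR s ⟨hs.1, hs.2.le⟩) (Real.exp_pos _).le) hσ
  rw [norm_smul, ← eunorm_eq, Real.norm_eq_abs, abs_of_pos (Real.exp_pos _)] at key
  have hp := Real.exp_pos (α * σ)
  have hq : 0 ≤ R / α := by positivity
  by_contra! hc
  nlinarith

/-- Appendix Lemma, full-state-feedback version. If `e(0) = 0`
and `r = ė + α e` for a constant `α > 0`, then there exist nonnegative constants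
`ξ₁, ξ₂, ξ₃`, depending only on `β`, `α` and the bounding constants
`m₂, ζM1, ζC1, ζC2, ζG, ζF, ζd1`, such that for every `t ≥ 0`,
`‖Ω(t)‖ ≤ (ξ₁ + ξ₂ E(t) + ξ₃ R(t)) R(t)` where `E(t) = sup_{0≤σ≤t} ‖e(σ)‖`
and `R(t) = sup_{0≤σ≤t} ‖r(σ)‖`. -/
theorem appendix_lemma_fsfb
    (β α m₂ ζM1 ζC1 ζC2 ζG ζF ζd1 : ℝ)
    (hβ : 0 < β) (hα : 0 < α) :
    ∃ ξ₁ ξ₂ ξ₃ : ℝ, 0 ≤ ξ₁ ∧ 0 ≤ ξ₂ ∧ 0 ≤ ξ₃ ∧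
      ∀ (n : ℕ) (q qd q' qd' : ℝ → Fin n → ℝ)
        (Mm : (Fin n → ℝ) → Matrix (Fin n) (Fin n) ℝ)
        (Cc : (Fin n → ℝ) → (Fin n → ℝ) → Matrix (Fin n) (Fin n) ℝ)
        (G : (Fin n → ℝ) → Fin n → ℝ)
        (Fd : Matrix (Fin n) (Fin n) ℝ)
        (Ω : ℝ → Fin n → ℝ),
        -- trajectories and their derivatives
        (∀ t, HasDerivAt q (q' t) t) → (∀ t, HasDerivAt qd (qd' t) t) →
        Continuous q' → Continuous qd' →
        -- initial rest conditions and e(0) = 0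
        q' 0 = 0 → qd' 0 = 0 → qd 0 = q 0 →
        -- bounded desired velocity
        (∀ t, 0 ≤ t → eunorm (qd' t) ≤ ζd1) →
        -- induced-norm bounds on the dynamic terms
        (∀ a v, eunorm ((Mm a).mulVec v) ≤ m₂ * eunorm v) →
        (∀ a b v, eunorm ((Mm a - Mm b).mulVec v) ≤ ζM1 * eunorm (a - b) * eunorm v) →
        (∀ a w v, eunorm ((Cc a w).mulVec v) ≤ ζC1 * eunorm w * eunorm v) →
        (∀ a b w v, eunorm ((Cc a w - Cc b w).mulVec v) ≤
          ζC2 * eunorm (a - b) * eunorm w * eunorm v) →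
        -- C is linear in its second argument and satisfies the switching property
        (∀ a, IsLinearMap ℝ (Cc a)) →
        (∀ a ν ξ, (Cc a ν).mulVec ξ = (Cc a ξ).mulVec ν) →
        (∀ a b, eunorm (G a - G b) ≤ ζG * eunorm (a - b)) →
        (∀ v, eunorm (Fd.mulVec v) ≤ ζF * eunorm v) →
        -- (d/dt)[M(q(t))] = C(q, q̇) + C(q, q̇)ᵀ along any C¹ curve
        (∀ (c c' : ℝ → Fin n → ℝ), (∀ s, HasDerivAt c (c' s) s) →
          ∀ s i j, HasDerivAt (fun u => Mm (c u) i j)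
            ((Cc (c s) (c' s) + (Cc (c s) (c' s))ᵀ) i j) s) →
        -- definition of Ω via the filter f(t) = β exp(-βt):
        -- Ω(t) = ∫₀ᵗ f'(t-σ) h(σ) dσ + f(0) h(t) - f(t) h(0) + ∫₀ᵗ f(t-σ) g(σ) dσ
        (∀ t, Ω t =
          (∫ σ in (0:ℝ)..t, (-β ^ 2 * Real.exp (-β * (t - σ))) •
              ((Mm (q σ)).mulVec (q' σ) - (Mm (qd σ)).mulVec (qd' σ)))
          + β • ((Mm (q t)).mulVec (q' t) - (Mm (qd t)).mulVec (qd' t))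
          - (β * Real.exp (-β * t)) •
              ((Mm (q 0)).mulVec (q' 0) - (Mm (qd 0)).mulVec (qd' 0))
          + ∫ σ in (0:ℝ)..t, (β * Real.exp (-β * (t - σ))) •
              (-((Cc (q σ) (q' σ) + (Cc (q σ) (q' σ))ᵀ).mulVec (q' σ))
                + (Cc (qd σ) (qd' σ) + (Cc (qd σ) (qd' σ))ᵀ).mulVec (qd' σ)
                + (Cc (q σ) (q' σ)).mulVec (q' σ)
                - (Cc (qd σ) (qd' σ)).mulVec (qd' σ)
                + G (q σ) - G (qd σ) + Fd.mulVec (q' σ - qd' σ))) →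
        -- conclusion, with e = q_d - q and r = ė + α e
        ∀ t, 0 ≤ t →
          eunorm (Ω t) ≤
            (ξ₁ + ξ₂ * sSup ((fun σ => eunorm (qd σ - q σ)) '' Set.Icc 0 t)
                + ξ₃ * sSup ((fun σ =>
                    eunorm ((qd' σ - q' σ) + α • (qd σ - q σ))) '' Set.Icc 0 t))
              * sSup ((fun σ =>
                  eunorm ((qd' σ - q' σ) + α • (qd σ - q σ))) '' Set.Icc 0 t) := by
  refine ⟨2 * β * (2 * |m₂| + |ζM1| * |ζd1| / α) + (4 * |ζC1| * |ζd1| +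
    |ζC2| * |ζd1| ^ 2 / α + |ζG| / α + 2 * |ζF|), 0, 4 * |ζC1|, by positivity, le_rfl,
    by positivity, ?_⟩
  intro n q qd q' qd' Mm Cc G Fd Ω hq hqd hq'c hqd'c hq0 hqd0 he0 hd hM hM1 hC1 hC2 hClin _
    hG hF _ hΩ t ht
  rw [zero_mul, add_zero]
  set R := sSup ((fun σ =>
    eunorm ((qd' σ - q' σ) + α • (qd σ - q σ))) '' Set.Icc 0 t) with hRdef
  have hqc : Continuous q := continuous_iff_continuousAt.2 fun s => (hq s).continuousAt
  have hqdc : Continuous qd := continuous_iff_continuousAt.2 fun s => (hqd s).continuousAt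
  have hRb : ∀ σ ∈ Set.Icc 0 t, eunorm ((qd' σ - q' σ) + α • (qd σ - q σ)) ≤ R := by
    intro σ hσ
    refine le_csSup (IsCompact.bddAbove (isCompact_Icc.image ?_)) ⟨σ, hσ, rfl⟩
    exact eunorm_continuous.comp (by fun_prop)
  have hR0 : 0 ≤ R := (eunorm_nonneg _).trans (hRb 0 ⟨le_rfl, ht⟩)
  have hsymm : ∀ a b : Fin n → ℝ, eunorm (a - b) = eunorm (b - a) := fun a b => by
    rw [← eunorm_neg, neg_sub]
  have hE : ∀ σ ∈ Set.Icc 0 t, eunorm (q σ - qd σ) ≤ R / α := by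
    intro σ hσ
    rw [hsymm]
    exact eunorm_err α t R hα (fun s => qd s - q s) (fun s => qd' s - q' s)
      (fun s => (hqd s).sub (hq s)) (by simp [he0]) hRb σ hσ
  have hE' : ∀ σ ∈ Set.Icc 0 t, eunorm (q' σ - qd' σ) ≤ 2 * R := by
    intro σ hσ
    have h1 : qd' σ - q' σ = ((qd' σ - q' σ) + α • (qd σ - q σ)) - α • (qd σ - q σ) := by abel
    have h2 := eunorm_sub_le ((qd' σ - q' σ) + α • (qd σ - q σ)) (α • (qd σ - q σ))
    rw [← h1, eunorm_smul, abs_of_pos hα, hsymm (qd σ)] at h2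
    have h3 := mul_le_mul_of_nonneg_left (hE σ hσ) hα.le
    have h4 : α * (R / α) = R := by field_simp
    rw [hsymm]
    linarith [hRb σ hσ]
  set d := |ζd1| with hddef
  have hd0 : 0 ≤ d := abs_nonneg _
  have hd' : ∀ σ ∈ Set.Icc 0 t, eunorm (qd' σ) ≤ d := fun σ hσ =>
    (hd σ hσ.1).trans (le_abs_self _)
  have hq'b : ∀ σ ∈ Set.Icc 0 t, eunorm (q' σ) ≤ d + 2 * R := by
    intro σ hσ
    have h1 : q' σ = qd' σ + (q' σ - qd' σ) := by abel
    rw [h1]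
    exact (eunorm_add_le _ _).trans (add_le_add (hd' σ hσ) (hE' σ hσ))
  have hh : ∀ σ ∈ Set.Icc 0 t,
      eunorm ((Mm (q σ)).mulVec (q' σ) - (Mm (qd σ)).mulVec (qd' σ))
        ≤ |m₂| * (2 * R) + |ζM1| * (R / α) * d := by
    intro σ hσ
    have h1 : (Mm (q σ)).mulVec (q' σ) - (Mm (qd σ)).mulVec (qd' σ)
        = (Mm (q σ)).mulVec (q' σ - qd' σ) + (Mm (q σ) - Mm (qd σ)).mulVec (qd' σ) := by
      rw [Matrix.mulVec_sub, Matrix.sub_mulVec]; abel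
    rw [h1]
    refine (eunorm_add_le _ _).trans (add_le_add ((hM _ _).trans ?_) ((hM1 _ _ _).trans ?_))
    · have := eunorm_nonneg (q' σ - qd' σ)
      have := hE' σ hσ
      gcongr
      exact le_abs_self _
    · have := eunorm_nonneg (q σ - qd σ)
      have := eunorm_nonneg (qd' σ)
      have := hE σ hσ
      have := hd' σ hσ
      gcongr
      exact le_abs_self _
  have hg : ∀ σ ∈ Set.Icc 0 t,
      eunorm (-((Cc (q σ) (q' σ) + (Cc (q σ) (q' σ))ᵀ).mulVec (q' σ))
                + (Cc (qd σ) (qd' σ) + (Cc (qd σ) (qd' σ))ᵀ).mulVec (qd' σ)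
                + (Cc (q σ) (q' σ)).mulVec (q' σ)
                - (Cc (qd σ) (qd' σ)).mulVec (qd' σ)
                + G (q σ) - G (qd σ) + Fd.mulVec (q' σ - qd' σ))
        ≤ |ζC1| * (d + 2 * R) * (2 * R) + |ζC1| * (2 * R) * d + |ζC2| * (R / α) * d * d
          + |ζG| * (R / α) + |ζF| * (2 * R) := by
    intro σ hσ
    have h1 : (-((Cc (q σ) (q' σ) + (Cc (q σ) (q' σ))ᵀ).mulVec (q' σ))
                + (Cc (qd σ) (qd' σ) + (Cc (qd σ) (qd' σ))ᵀ).mulVec (qd' σ)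
                + (Cc (q σ) (q' σ)).mulVec (q' σ)
                - (Cc (qd σ) (qd' σ)).mulVec (qd' σ)
                + G (q σ) - G (qd σ) + Fd.mulVec (q' σ - qd' σ))
        = -((Cc (q σ) (q' σ))ᵀ.mulVec (q' σ - qd' σ))
          + -((Cc (q σ) (q' σ - qd' σ))ᵀ.mulVec (qd' σ))
          + -((Cc (q σ) (qd' σ) - Cc (qd σ) (qd' σ))ᵀ.mulVec (qd' σ))
          + (G (q σ) - G (qd σ)) + Fd.mulVec (q' σ - qd' σ) := by
      rw [(hClin (q σ)).map_sub]
      simp only [Matrix.transpose_sub, Matrix.mulVec_sub, Matrix.sub_mulVec, Matrix.add_mulVec]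
      abel
    rw [h1]
    have n1 := eunorm_nonneg (q' σ - qd' σ)
    have n2 := eunorm_nonneg (q σ - qd σ)
    have n3 := eunorm_nonneg (qd' σ)
    have n4 := eunorm_nonneg (q' σ)
    have b1 := hE' σ hσ
    have b2 := hE σ hσ
    have b3 := hd' σ hσ
    have b4 := hq'b σ hσ
    refine (eunorm_add_le _ _).trans (add_le_add ((eunorm_add_le _ _).trans (add_le_add
      ((eunorm_add_le _ _).trans (add_le_add ((eunorm_add_le _ _).trans (add_le_add
      ?_ ?_)) ?_)) ((hG _ _).trans ?_))) ((hF _).trans ?_))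
    · rw [eunorm_neg]
      refine (eunorm_transpose _ _ (hC1 _ _) _).trans ?_
      gcongr
      exact le_abs_self _
    · rw [eunorm_neg]
      refine (eunorm_transpose _ _ (hC1 _ _) _).trans ?_
      gcongr
      exact le_abs_self _
    · rw [eunorm_neg]
      refine (eunorm_transpose _ _ (hC2 _ _ _) _).trans ?_
      gcongr
      exact le_abs_self _
    · gcongr
      exact le_abs_self _
    · gcongr
      exact le_abs_self _
  set H := |m₂| * (2 * R) + |ζM1| * (R / α) * d with hHdef
  have i1 : eunorm (∫ σ in (0:ℝ)..t, (-β ^ 2 * Real.exp (-β * (t - σ))) •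
              ((Mm (q σ)).mulVec (q' σ) - (Mm (qd σ)).mulVec (qd' σ))) ≤ β * H := by
    have h1 : ∀ σ : ℝ, (-β ^ 2 * Real.exp (-β * (t - σ))) •
              ((Mm (q σ)).mulVec (q' σ) - (Mm (qd σ)).mulVec (qd' σ))
        = (β * Real.exp (-β * (t - σ))) • ((-β) •
              ((Mm (q σ)).mulVec (q' σ) - (Mm (qd σ)).mulVec (qd' σ))) := by
      intro σ
      rw [smul_smul]; congr 1; ring
    simp only [h1]
    apply eunorm_filter β t _ hβ ht
    intro σ hσ
    rw [eunorm_smul, abs_neg, abs_of_pos hβ]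
    exact mul_le_mul_of_nonneg_left (hh σ hσ) hβ.le
  have i2 : eunorm (β • ((Mm (q t)).mulVec (q' t) - (Mm (qd t)).mulVec (qd' t))) ≤ β * H := by
    rw [eunorm_smul, abs_of_pos hβ]
    exact mul_le_mul_of_nonneg_left (hh t ⟨ht, le_rfl⟩) hβ.le
  have i3 := eunorm_filter β t _ hβ ht _ hg
  have hz : (β * Real.exp (-β * t)) •
              ((Mm (q 0)).mulVec (q' 0) - (Mm (qd 0)).mulVec (qd' 0)) = 0 := by
    simp [hq0, hqd0]
  rw [hΩ t, hz, sub_zero]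
  refine (eunorm_add_le _ _).trans ((add_le_add ((eunorm_add_le _ _).trans
    (add_le_add i1 i2)) i3).trans (le_of_eq ?_))
  rw [hHdef]
  field_simp
  ring
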